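/- Let β > 2 and let (α_N) be a sequence with α_N > 0, α_N → 0 and N·α_N → 0. Then, as N → ∞ through even integers, the pushforward of the Gibbs measure μ_{N,α_N,β} under the map σ ↦ (m₁(σ), m₂(σ)) converges weakly in the space of probability measures on ℝ² to the four-point mixture (1/4)(δ_{(m⁺(β/2), m⁺(β/2))} + δ_{(m⁺(β/2), m⁻(β/2))} + δ_{(m⁻(β/2), m⁺(β/2))} + δ_{(m⁻(β/2), m⁻(β/2))}). -/

import Mathlib

open MeasureTheory Filter

noncomputable section

/-- The spin value ±1 associated to a Boolean. -/
def spinVal (s : Bool) : ℝ := if s then 1 else -1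

/-- A spin configuration on `N = 2n` sites, split into the two blocks
`B₁` (first component) and `B₂` (second component); the perfect matching
pairs the `i`-th spin of `B₁` with the `i`-th spin of `B₂`. -/
abbrev TwoConf (n : ℕ) := (Fin n → Bool) × (Fin n → Bool)

/-- Block magnetization `m₁(σ) = (2/N) ∑_{i ∈ B₁} σᵢ` with `N = 2n`. -/
def mag1 (n : ℕ) (σ : TwoConf n) : ℝ := (2 / (2 * n : ℝ)) * ∑ i, spinVal (σ.1 i)

/-- Block magnetization `m₂(σ) = (2/N) ∑_{i ∈ B₂} σᵢ` with `N = 2n`. -/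
def mag2 (n : ℕ) (σ : TwoConf n) : ℝ := (2 / (2 * n : ℝ)) * ∑ i, spinVal (σ.2 i)

/-- The Hamiltonian
`H_{N,α,β}(σ) = −(β/(2N))(∑_{i,j∈B₁} σᵢσⱼ + ∑_{i,j∈B₂} σᵢσⱼ) − α ∑_{i∈B₁} σᵢ σ_{i+N/2}`
with `N = 2n`. -/
def twoH (n : ℕ) (α β : ℝ) (σ : TwoConf n) : ℝ :=
  -(β / (2 * (2 * n : ℝ))) *
      ((∑ i, ∑ j, spinVal (σ.1 i) * spinVal (σ.1 j)) +
        ∑ i, ∑ j, spinVal (σ.2 i) * spinVal (σ.2 j))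
    - α * ∑ i, spinVal (σ.1 i) * spinVal (σ.2 i)

/-- The distribution of the magnetization vector `(m₁, m₂)` under the Gibbs measure
`μ_{N,α,β}`, i.e. the pushforward of the Gibbs measure under `σ ↦ (m₁(σ), m₂(σ))`. -/
def twoMagDist (n : ℕ) (α β : ℝ) : Measure (ℝ × ℝ) :=
  (∑ σ : TwoConf n, ENNReal.ofReal (Real.exp (-twoH n α β σ)))⁻¹ •
    ∑ σ : TwoConf n,
      ENNReal.ofReal (Real.exp (-twoH n α β σ)) • Measure.dirac (mag1 n σ, mag2 n σ)

/-!
At `α = 0` the blocks are independent Curie–Weiss models at inverse temperature `γ = β / 2`. The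
tangent-line bound `m² ≥ 2 x m - x²`, an equality at `m = x`, bounds the partition function below
by `exp (n G(y))` for every `y` and the weight of `{m = x}` above by `exp (n G(x))`, where
`G(x) = log (2 cosh (γ x)) - γ x² / 2`. Since `G` is maximal exactly where `|x|` is the largest
solution of `x = tanh (γ x)`, and only `n + 1` magnetizations occur, `|m|` concentrates there, and
spin-flip symmetry makes both signs equally likely. The coupling changes the energy by at most
`n |α_{2n}| → 0`, hence averages by a vanishing amount.
-/

section TanhFixedPoint

lemma hasDerivAt_tanh (x : ℝ) : HasDerivAt Real.tanh (1 / Real.cosh x ^ 2) x := by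
  rw [show Real.tanh = Real.sinh / Real.cosh from funext Real.tanh_eq_sinh_div_cosh,
    ← Real.cosh_sq_sub_sinh_sq x]
  exact ((Real.hasDerivAt_sinh x).div (Real.hasDerivAt_cosh x) (Real.cosh_pos x).ne').congr_deriv
    (by ring)

lemma continuous_tanh : Continuous Real.tanh :=
  continuous_iff_continuousAt.mpr fun x => (hasDerivAt_tanh x).continuousAt

lemma strictConcaveOn_tanh : StrictConcaveOn ℝ (Set.Ici 0) Real.tanh := by
  refine StrictAntiOn.strictConcaveOn_of_deriv (convex_Ici 0) continuous_tanh.continuousOn ?_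
  intro x hx y hy hxy
  rw [interior_Ici, Set.mem_Ioi] at hx hy
  have hcosh : Real.cosh x < Real.cosh y := by
    rwa [Real.cosh_lt_cosh, abs_of_pos hx, abs_of_pos hy]
  have := Real.cosh_pos x
  rw [(hasDerivAt_tanh x).deriv, (hasDerivAt_tanh y).deriv]
  gcongr

variable {γ m x : ℝ}

lemma lt_tanh_of_lt_fixedPoint (hγ : 0 < γ) (hm : m = Real.tanh (γ * m)) (hx : 0 < x)
    (hxm : x < m) : x < Real.tanh (γ * x) := by
  have hm0 : 0 < m := hx.trans hxm
  have hγm : 0 < γ * m := mul_pos hγ hm0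
  have hconc := strictConcaveOn_tanh.2 Set.self_mem_Ici (Set.mem_Ici.mpr hγm.le) hγm.ne
    (sub_pos.mpr ((div_lt_one hm0).mpr hxm)) (div_pos hx hm0) (sub_add_cancel 1 (x / m))
  have hpoint : x / m * (γ * m) = γ * x := by field_simp
  simpa [← hm, hpoint, div_mul_cancel₀ x hm0.ne'] using hconc

lemma tanh_lt_of_fixedPoints_lt (hmax : ∀ z, z = Real.tanh (γ * z) → z < x) :
    Real.tanh (γ * x) < x := by
  by_contra! hx
  have hcont : ContinuousOn (fun z => Real.tanh (γ * z) - z) (Set.Icc x 1) :=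
    ((continuous_tanh.comp (continuous_const_mul γ)).sub continuous_id).continuousOn
  obtain ⟨z, hz, hz0⟩ := intermediate_value_Icc' (hx.trans (Real.tanh_lt_one _).le) hcont
    ⟨sub_nonpos.mpr (Real.tanh_lt_one _).le, sub_nonneg.mpr hx⟩
  exact (hmax z (sub_eq_zero.mp hz0).symm).not_ge hz.1

end TanhFixedPoint

section FreeEnergy

/-- The Curie–Weiss free energy functional `x ↦ log (2 cosh (γ x)) - γ x² / 2` produced by the
Hubbard–Stratonovich linearization: its critical points are the solutions of `x = tanh (γ x)`. -/
def freeEnergy (γ x : ℝ) : ℝ := Real.log (2 * Real.cosh (γ * x)) - γ * x ^ 2 / 2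

variable {γ m x : ℝ}

lemma hasDerivAt_freeEnergy (γ x : ℝ) :
    HasDerivAt (freeEnergy γ) (γ * (Real.tanh (γ * x) - x)) x := by
  have hcosh := (Real.cosh_pos (γ * x)).ne'
  have hlog := ((((hasDerivAt_id x).const_mul γ).cosh).const_mul 2).log (by simpa using hcosh)
  have hsq := ((hasDerivAt_pow 2 x).const_mul γ).div_const 2
  refine (hlog.sub hsq).congr_deriv ?_
  simp only [id_eq, Real.tanh_eq_sinh_div_cosh]
  field_simp
  ring

lemma continuous_freeEnergy (γ : ℝ) : Continuous (freeEnergy γ) :=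
  continuous_iff_continuousAt.mpr fun x => (hasDerivAt_freeEnergy γ x).continuousAt

lemma freeEnergy_abs (γ x : ℝ) : freeEnergy γ |x| = freeEnergy γ x := by
  rw [freeEnergy, sq_abs, ← Real.cosh_abs, abs_mul, abs_abs, ← abs_mul, Real.cosh_abs, freeEnergy]

lemma freeEnergy_lt_of_abs_ne (hγ : 0 < γ) (hm : IsGreatest {z | z = Real.tanh (γ * z)} m)
    (hx : |x| ≠ m) : freeEnergy γ x < freeEnergy γ m := by
  rw [← freeEnergy_abs]
  have hm0 : 0 ≤ m := hm.2 (by simp)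
  rcases hx.lt_or_gt with hxm | hmx
  · have hmono : StrictMonoOn (freeEnergy γ) (Set.Icc 0 m) := by
      refine strictMonoOn_of_deriv_pos (convex_Icc 0 m) (continuous_freeEnergy γ).continuousOn ?_
      intro y hy
      rw [interior_Icc] at hy
      rw [(hasDerivAt_freeEnergy γ y).deriv]
      exact mul_pos hγ (sub_pos.mpr (lt_tanh_of_lt_fixedPoint hγ hm.1 hy.1 hy.2))
    exact hmono ⟨abs_nonneg x, hxm.le⟩ ⟨hm0, le_rfl⟩ hxm
  · have hanti : StrictAntiOn (freeEnergy γ) (Set.Ici m) := by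
      refine strictAntiOn_of_deriv_neg (convex_Ici m) (continuous_freeEnergy γ).continuousOn ?_
      intro y hy
      rw [interior_Ici] at hy
      rw [(hasDerivAt_freeEnergy γ y).deriv]
      exact mul_neg_of_pos_of_neg hγ
        (sub_neg.mpr (tanh_lt_of_fixedPoints_lt fun z hz => (hm.2 hz).trans_lt hy))
    exact hanti Set.self_mem_Ici hmx.le hmx

lemma exists_freeEnergy_le_sub (hγ : 0 < γ) (hm : IsGreatest {z | z = Real.tanh (γ * z)} m)
    {ε : ℝ} (hε : 0 < ε) :
    ∃ δ > 0, ∀ x, |x| ≤ 1 → ε ≤ |(|x| - m)| → freeEnergy γ x ≤ freeEnergy γ m - δ := by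
  have hcompact : IsCompact (Set.Icc (-1 : ℝ) 1 ∩ {x | ε ≤ |(|x| - m)|}) :=
    isCompact_Icc.inter_right (isClosed_le continuous_const (by fun_prop))
  have hlt : ∀ x ∈ Set.Icc (-1 : ℝ) 1 ∩ {x | ε ≤ |(|x| - m)|},
      0 < freeEnergy γ m - freeEnergy γ x := fun x hx =>
    sub_pos.mpr <| freeEnergy_lt_of_abs_ne hγ hm fun h => by
      have hxε : ε ≤ |(|x| - m)| := hx.2
      rw [h, sub_self, abs_zero] at hxε
      exact hxε.not_gt hε
  obtain ⟨δ, hδ, hgap⟩ := hcompact.exists_forall_le'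
    (continuous_const.sub (continuous_freeEnergy γ)).continuousOn hlt
  exact ⟨δ, hδ, fun x hx1 hxε => le_sub_comm.mp (hgap x ⟨abs_le.mp hx1, hxε⟩)⟩

end FreeEnergy

section GibbsLaw

/-- The law of an observable `X` when `i : ι` is drawn with probability proportional to `w i`.
The weights are meant to be nonnegative: negative ones are truncated to `0`. -/
def gibbsLaw {ι E : Type*} [Fintype ι] [MeasurableSpace E] (w : ι → ℝ) (X : ι → E) : Measure E :=
  (∑ i, ENNReal.ofReal (w i))⁻¹ • ∑ i, ENNReal.ofReal (w i) • Measure.dirac (X i)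

variable {ι κ E F : Type*} [Fintype ι] [Fintype κ] [MeasurableSpace E] [MeasurableSpace F]

lemma gibbsLaw_comp_equiv (e : κ ≃ ι) (w : ι → ℝ) (X : ι → E) :
    gibbsLaw (w ∘ e) (X ∘ e) = gibbsLaw w X := by
  simp only [gibbsLaw, Function.comp_apply, e.sum_comp fun i => ENNReal.ofReal (w i),
    e.sum_comp fun i => ENNReal.ofReal (w i) • Measure.dirac (X i)]

lemma map_gibbsLaw {g : E → F} (hg : Measurable g) (w : ι → ℝ) (X : ι → E) :
    (gibbsLaw w X).map g = gibbsLaw w (g ∘ X) := by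
  simp only [gibbsLaw, Measure.map_smul, Measure.map_finset_sum' hg.aemeasurable,
    Measure.map_dirac' hg, Function.comp_apply]

lemma gibbsLaw_prod {w : ι → ℝ} (hw : ∀ i, 0 ≤ w i) (v : κ → ℝ) (X : ι → E) (Y : κ → F) :
    (gibbsLaw w X).prod (gibbsLaw v Y) =
      gibbsLaw (fun p : ι × κ => w p.1 * v p.2) (fun p => (X p.1, Y p.2)) := by
  have hmass : ∑ p : ι × κ, ENNReal.ofReal (w p.1 * v p.2) =
      (∑ i, ENNReal.ofReal (w i)) * ∑ k, ENNReal.ofReal (v k) := by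
    simp only [ENNReal.ofReal_mul (hw _), Fintype.sum_prod_type, Finset.sum_mul_sum]
  have hinv := ENNReal.mul_inv (a := ∑ i, ENNReal.ofReal (w i)) (b := ∑ k, ENNReal.ofReal (v k))
    (.inr (by simp)) (.inl (by simp))
  rw [gibbsLaw, gibbsLaw, gibbsLaw, hmass, hinv]
  simp only [Measure.prod_smul_left, Measure.prod_smul_right, smul_smul, ← Measure.sum_fintype,
    Measure.prod_sum, Measure.dirac_prod_dirac, ENNReal.ofReal_mul (hw _), mul_comm]

lemma isProbabilityMeasure_gibbsLaw [Nonempty ι] {w : ι → ℝ} (hw : ∀ i, 0 < w i) (X : ι → E) :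
    IsProbabilityMeasure (gibbsLaw w X) := by
  refine ⟨?_⟩
  simp only [gibbsLaw, Measure.smul_apply, Measure.finsetSum_apply, measure_univ, smul_eq_mul,
    mul_one]
  refine ENNReal.inv_mul_cancel ?_ (by simp)
  simp [hw]

variable [MeasurableSingletonClass E] {G : Type*} [NormedAddCommGroup G] [NormedSpace ℝ G]
  [CompleteSpace G]

lemma integral_gibbsLaw {w : ι → ℝ} (hw : ∀ i, 0 ≤ w i) (X : ι → E) (f : E → G) :
    ∫ x, f x ∂gibbsLaw w X = Finset.univ.centerMass w (f ∘ X) := by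
  rw [gibbsLaw, integral_smul_measure, integral_finsetSum_measure fun i _ =>
    (integrable_dirac (by simp)).smul_measure ENNReal.ofReal_ne_top,
    ← ENNReal.ofReal_sum_of_nonneg fun i _ => hw i, ENNReal.toReal_inv,
    ENNReal.toReal_ofReal (Finset.sum_nonneg fun i _ => hw i)]
  simp only [integral_smul_measure, integral_dirac, ENNReal.toReal_ofReal (hw _),
    Finset.centerMass, Function.comp_apply]

lemma measureReal_gibbsLaw {w : ι → ℝ} (hw : ∀ i, 0 ≤ w i) (X : ι → E) {A : Set E}
    (hA : MeasurableSet A) [DecidablePred (X · ∈ A)] :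
    (gibbsLaw w X).real A = (∑ i with X i ∈ A, w i) / ∑ i, w i := by
  rw [← integral_indicator_one hA, integral_gibbsLaw hw, Finset.centerMass, smul_eq_mul,
    inv_mul_eq_div, Finset.sum_filter]
  simp [Set.indicator_apply]

lemma ae_mem_image_gibbsLaw [DecidableEq E] (w : ι → ℝ) (X : ι → E) :
    ∀ᵐ x ∂gibbsLaw w X, x ∈ Finset.univ.image X := by
  simp [gibbsLaw, ae_iff]

end GibbsLaw

section Perturbation

lemma abs_exp_sub_one_le_exp_sub_one {a x : ℝ} (hx : |x| ≤ a) :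
    |Real.exp x - 1| ≤ Real.exp a - 1 := by
  have hexp := Real.exp_le_exp.mpr (abs_le.mp hx).1
  have hexp' := Real.exp_le_exp.mpr (abs_le.mp hx).2
  have hsum : 2 ≤ Real.exp a + Real.exp (-a) := by
    linarith [Real.one_le_cosh a, Real.cosh_eq a]
  rw [abs_le]
  constructor <;> linarith

variable {ι G : Type*} [Fintype ι] [Nonempty ι] [NormedAddCommGroup G] [NormedSpace ℝ G]
  {w : ι → ℝ}

lemma norm_centerMass_le (hw : ∀ i, 0 < w i) {F : ι → G} {C : ℝ} (hF : ∀ i, ‖F i‖ ≤ C) :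
    ‖Finset.univ.centerMass w F‖ ≤ C := by
  have hmem := (convex_closedBall (0 : G) C).centerMass_mem (t := Finset.univ) (w := w) (z := F)
    (fun i _ => (hw i).le) (Finset.sum_pos (fun i _ => hw i) Finset.univ_nonempty)
    fun i _ => mem_closedBall_zero_iff.mpr (hF i)
  exact mem_closedBall_zero_iff.mp hmem

lemma centerMass_mul_weights (hw : ∀ i, 0 < w i) (v : ι → ℝ) (F : ι → G) :
    Finset.univ.centerMass (fun i => w i * v i) F =
      Finset.univ.centerMass w fun i => (v i / Finset.univ.centerMass w v) • F i := by
  have hsum : ∑ i, w i ≠ 0 := (Finset.sum_pos (fun i _ => hw i) Finset.univ_nonempty).ne'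
  simp only [Finset.centerMass, Finset.smul_sum, smul_smul, smul_eq_mul]
  refine Finset.sum_congr rfl fun i _ => ?_
  congr 1
  field_simp

/-- Change of weights by a density `exp u`: the normalizing constant lies in `[exp (-a), exp a]`,
so the normalized density lies in `[exp (-2a), exp (2a)]`. -/
lemma norm_centerMass_mul_exp_sub_le (hw : ∀ i, 0 < w i) {u : ι → ℝ} {a : ℝ}
    (hu : ∀ i, |u i| ≤ a) {F : ι → G} {C : ℝ} (hF : ∀ i, ‖F i‖ ≤ C) :
    ‖Finset.univ.centerMass (fun i => w i * Real.exp (u i)) F - Finset.univ.centerMass w F‖ ≤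
      (Real.exp (2 * a) - 1) * C := by
  set Z := Finset.univ.centerMass w fun i => Real.exp (u i) with hZ_def
  have hZ : Z ∈ Set.Icc (Real.exp (-a)) (Real.exp a) :=
    (convex_Icc _ _).centerMass_mem (fun i _ => (hw i).le)
      (Finset.sum_pos (fun i _ => hw i) Finset.univ_nonempty) fun i _ =>
      ⟨Real.exp_le_exp.mpr (abs_le.mp (hu i)).1, Real.exp_le_exp.mpr (abs_le.mp (hu i)).2⟩
  have hZ_pos : 0 < Z := (Real.exp_pos _).trans_le hZ.1
  have hlogZ : |Real.log Z| ≤ a :=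
    abs_le.mpr ⟨(Real.le_log_iff_exp_le hZ_pos).mpr hZ.1, (Real.log_le_iff_le_exp hZ_pos).mpr hZ.2⟩
  have hdensity : ∀ i, |Real.exp (u i) / Z - 1| ≤ Real.exp (2 * a) - 1 := fun i => by
    rw [← Real.exp_log hZ_pos, ← Real.exp_sub]
    refine abs_exp_sub_one_le_exp_sub_one ((abs_sub _ _).trans ?_)
    linarith [hu i]
  have hdiff : Finset.univ.centerMass (fun i => w i * Real.exp (u i)) F -
      Finset.univ.centerMass w F =
      Finset.univ.centerMass w fun i => (Real.exp (u i) / Z - 1) • F i := by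
    rw [centerMass_mul_weights hw, ← hZ_def]
    simp only [Finset.centerMass, sub_smul, one_smul, smul_sub, Finset.sum_sub_distrib]
  rw [hdiff]
  refine norm_centerMass_le hw fun i => ?_
  rw [norm_smul, Real.norm_eq_abs]
  exact mul_le_mul (hdensity i) (hF i) (norm_nonneg _) ((abs_nonneg _).trans (hdensity i))

end Perturbation

section Concentration

lemma abs_integral_sub_le {E : Type*} [MeasurableSpace E] {μ : Measure E} [IsProbabilityMeasure μ]
    {g : E → ℝ} (hg : Measurable g) {c C η : ℝ} (hC : ∀ x, |g x - c| ≤ C) (hη : 0 ≤ η) :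
    |∫ x, g x ∂μ - c| ≤ η + C * μ.real {x | η ≤ |g x - c|} := by
  have hS : MeasurableSet {x | η ≤ |g x - c|} :=
    measurableSet_le measurable_const (hg.sub_const c).abs
  have hsub_int : Integrable (fun x => g x - c) μ :=
    .of_bound (hg.sub_const c).aestronglyMeasurable C (.of_forall hC)
  have hg_int : Integrable g μ :=
    (hsub_int.add (integrable_const c)).congr (.of_forall fun x => sub_add_cancel (g x) c)
  have hbound_int : Integrable ({x | η ≤ |g x - c|}.indicator fun _ => C) μ :=
    (integrable_const C).indicator hS
  calc |∫ x, g x ∂μ - c| = |∫ x, (g x - c) ∂μ| := by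
        rw [integral_sub hg_int (integrable_const c)]; simp
    _ ≤ ∫ x, |g x - c| ∂μ := abs_integral_le_integral_abs
    _ ≤ ∫ x, (η + {x | η ≤ |g x - c|}.indicator (fun _ => C) x) ∂μ := by
        refine integral_mono hsub_int.abs ((integrable_const η).add hbound_int) fun x => ?_
        by_cases hx : η ≤ |g x - c|
        · simpa [hx] using (hC x).trans (le_add_of_nonneg_left hη)
        · simpa [hx] using (not_le.mp hx).le
    _ = η + C * μ.real {x | η ≤ |g x - c|} := by
        rw [integral_add (integrable_const η) hbound_int, integral_indicator_const C hS]
        simp [mul_comm]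

lemma tendsto_integral_of_tendsto_measureReal {E κ : Type*} [MeasurableSpace E] {l : Filter κ}
    {μ : κ → Measure E} [∀ k, IsProbabilityMeasure (μ k)] {g : E → ℝ} (hg : Measurable g)
    {c C : ℝ} (hC : ∀ x, |g x - c| ≤ C)
    (h : ∀ η > 0, Tendsto (fun k => (μ k).real {x | η ≤ |g x - c|}) l (nhds 0)) :
    Tendsto (fun k => ∫ x, g x ∂μ k) l (nhds c) := by
  rw [Metric.tendsto_nhds]
  intro η hη
  have hsmall : Tendsto (fun k => C * (μ k).real {x | η / 2 ≤ |g x - c|}) l (nhds 0) := by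
    simpa using (h (η / 2) (half_pos hη)).const_mul C
  filter_upwards [hsmall.eventually_lt_const (half_pos hη)] with k hk
  rw [Real.dist_eq]
  linarith [abs_integral_sub_le (μ := μ k) hg hC (half_pos hη).le]

/-- The law of `m` times a fair random sign. -/
def symmetricTwoPoint (m : ℝ) : ProbabilityMeasure ℝ :=
  ⟨(2 : ENNReal)⁻¹ • (Measure.dirac m + Measure.dirac (-m)),
    ⟨by simp [ENNReal.inv_two_add_inv_two]⟩⟩

lemma integral_symmetricTwoPoint (m : ℝ) (f : ℝ → ℝ) :
    ∫ x, f x ∂(symmetricTwoPoint m : Measure ℝ) = (f m + f (-m)) / 2 := by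
  rw [symmetricTwoPoint, ProbabilityMeasure.coe_mk, integral_smul_measure,
    integral_add_measure (integrable_dirac (by simp)) (integrable_dirac (by simp)),
    integral_dirac, integral_dirac]
  simp [inv_mul_eq_div]

lemma symmetricTwoPoint_prod_self (m : ℝ) :
    (symmetricTwoPoint m : Measure ℝ).prod (symmetricTwoPoint m) = (4 : ENNReal)⁻¹ •
      (Measure.dirac (m, m) + Measure.dirac (m, -m) + Measure.dirac (-m, m) +
        Measure.dirac (-m, -m)) := by
  have hinv : (2 : ENNReal)⁻¹ * 2⁻¹ = 4⁻¹ := by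
    rw [← ENNReal.mul_inv (by simp) (by simp)]; norm_num
  rw [symmetricTwoPoint, ProbabilityMeasure.coe_mk, Measure.prod_smul_left,
    Measure.prod_smul_right, smul_smul, hinv, Measure.add_prod, Measure.prod_add,
    Measure.prod_add]
  simp only [Measure.dirac_prod_dirac, add_assoc]

/-- A symmetric law sees only the even part of a test function, which is a function of `|x|`. -/
lemma tendsto_symmetricTwoPoint_of_isNegInvariant {κ : Type*} {l : Filter κ}
    {μ : κ → ProbabilityMeasure ℝ} [∀ k, (μ k : Measure ℝ).IsNegInvariant] {m : ℝ}
    (h : ∀ ε > 0, Tendsto (fun k => (μ k : Measure ℝ).real {x | ε ≤ |(|x| - m)|}) l (nhds 0)) :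
    Tendsto μ l (nhds (symmetricTwoPoint m)) := by
  rw [ProbabilityMeasure.tendsto_iff_forall_integral_tendsto]
  intro f
  let g : ℝ → ℝ := fun x => (f x + f (-x)) / 2
  have hg : Continuous g := by fun_prop
  have hg_abs : ∀ x, g |x| = g x := fun x => by
    rcases abs_choice x with hx | hx <;> simp [g, hx, add_comm]
  have hg_bound : ∀ x, |g x - g m| ≤ 2 * ‖f‖ := fun x => by
    have hf := fun y => abs_le.mp (f.norm_coe_le_norm y)
    simp only [g, abs_le]
    constructor <;> linarith [hf x, hf (-x), hf m, hf (-m)]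
  have heven : ∀ k, ∫ x, f x ∂(μ k : Measure ℝ) = ∫ x, g x ∂(μ k : Measure ℝ) := fun k => by
    have hf := f.integrable (μ k : Measure ℝ)
    rw [integral_div, integral_add hf hf.comp_neg, integral_neg_eq_self, add_self_div_two]
  simp only [heven, integral_symmetricTwoPoint]
  refine tendsto_integral_of_tendsto_measureReal hg.measurable hg_bound fun η hη => ?_
  obtain ⟨ε, hε, hclose⟩ := Metric.continuousAt_iff.mp hg.continuousAt η hη
  refine squeeze_zero (fun k => measureReal_nonneg) (fun k => measureReal_mono ?_) (h ε hε)
  intro x hx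
  by_contra! hxm
  replace hx : η ≤ |g (|x|) - g m| := by rwa [hg_abs]
  exact (hclose (not_le.mp hxm)).not_ge hx

lemma measureReal_le_card_mul {E : Type*} [MeasurableSpace E] {μ : Measure E} [IsFiniteMeasure μ]
    {T : Finset E} (hT : ∀ᵐ x ∂μ, x ∈ T) {A : Set E} {c : ℝ} (hc : 0 ≤ c)
    (hA : ∀ x ∈ T, x ∈ A → μ.real {x} ≤ c) : μ.real A ≤ T.card * c := by
  classical
  have hA_sub : A ≤ᵐ[μ] ⋃ x ∈ T.filter (· ∈ A), {x} := by
    filter_upwards [hT] with x hxT hxA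
    exact Set.mem_biUnion (Finset.mem_filter.mpr ⟨hxT, hxA⟩) rfl
  calc μ.real A ≤ μ.real (⋃ x ∈ T.filter (· ∈ A), {x}) :=
        ENNReal.toReal_mono (measure_ne_top μ _) (measure_mono_ae hA_sub)
    _ ≤ ∑ x ∈ T with x ∈ A, μ.real {x} := measureReal_biUnion_finset_le _ _
    _ ≤ (T.filter (· ∈ A)).card • c := Finset.sum_le_card_nsmul _ _ _ fun x hx =>
        hA x (Finset.mem_filter.mp hx).1 (Finset.mem_filter.mp hx).2
    _ ≤ T.card * c := by
        rw [nsmul_eq_mul]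
        gcongr
        exact Finset.filter_subset _ _

end Concentration

section CurieWeiss

lemma abs_spinVal (b : Bool) : |spinVal b| = 1 := by
  cases b <;> simp [spinVal]

lemma spinVal_not (b : Bool) : spinVal (!b) = -spinVal b := by
  cases b <;> simp [spinVal]

lemma sum_exp_mul_sum_spinVal {ι : Type*} [Fintype ι] [DecidableEq ι] (t : ℝ) :
    ∑ s : ι → Bool, Real.exp (t * ∑ i, spinVal (s i)) = (2 * Real.cosh t) ^ Fintype.card ι := by
  simp only [Finset.mul_sum, Real.exp_sum]
  rw [← Fintype.prod_sum fun (_ : ι) b => Real.exp (t * spinVal b)]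
  simp [spinVal, Real.cosh_eq, mul_div_cancel₀]

/-- The magnetization per spin of one block of `n` spins. -/
def magnetization {n : ℕ} (s : Fin n → Bool) : ℝ := (∑ i, spinVal (s i)) / n

variable {n : ℕ} {γ : ℝ}

lemma natCast_mul_magnetization (s : Fin n → Bool) :
    n * magnetization s = ∑ i, spinVal (s i) := by
  rcases n.eq_zero_or_pos with rfl | hn
  · simp
  · exact mul_div_cancel₀ _ (Nat.cast_ne_zero.mpr hn.ne')

lemma abs_magnetization_le_one (s : Fin n → Bool) : |magnetization s| ≤ 1 := by
  rw [magnetization, abs_div, Nat.abs_cast]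
  refine div_le_one_of_le₀ ((Finset.abs_sum_le_sum_abs _ _).trans ?_) n.cast_nonneg
  simp [abs_spinVal]

lemma magnetization_eq_card (s : Fin n → Bool) :
    magnetization s = (2 * (Finset.univ.filter (s · = true)).card - n) / n := by
  have hspin : ∀ b, spinVal b = 2 * (if b = true then 1 else 0) - 1 := fun b => by
    cases b <;> norm_num [spinVal]
  simp only [magnetization, hspin, Finset.sum_sub_distrib, ← Finset.mul_sum, Finset.sum_boole]
  simp

lemma card_image_magnetization_le :
    (Finset.univ.image (magnetization (n := n))).card ≤ n + 1 := by
  have hsub : Finset.univ.image (magnetization (n := n)) ⊆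
      (Finset.range (n + 1)).image fun k : ℕ => ((2 * k - n) / n : ℝ) := by
    refine Finset.image_subset_iff.mpr fun s _ => ?_
    rw [magnetization_eq_card]
    refine Finset.mem_image_of_mem (fun k : ℕ => ((2 * k - n) / n : ℝ)) ?_
    have hcard := Finset.card_filter_le Finset.univ (s · = true)
    exact Finset.mem_range_succ_iff.mpr (by simpa using hcard)
  exact (Finset.card_le_card hsub).trans (Finset.card_image_le.trans_eq (Finset.card_range _))

/-- The Boltzmann weight `exp (n γ m² / 2)` of a Curie–Weiss block of `n` spins with
magnetization `m`, at inverse temperature `γ`. -/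
def curieWeissWeight (γ : ℝ) (s : Fin n → Bool) : ℝ :=
  Real.exp (n * (γ * magnetization s ^ 2 / 2))

lemma curieWeissWeight_pos (γ : ℝ) (s : Fin n → Bool) : 0 < curieWeissWeight γ s :=
  Real.exp_pos _

/-- The law of the magnetization in the Curie–Weiss model. -/
def curieWeissLaw (n : ℕ) (γ : ℝ) : ProbabilityMeasure ℝ :=
  ⟨gibbsLaw (curieWeissWeight (n := n) γ) magnetization,
    isProbabilityMeasure_gibbsLaw (curieWeissWeight_pos γ) _⟩

instance (n : ℕ) (γ : ℝ) : (curieWeissLaw n γ : Measure ℝ).IsNegInvariant := by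
  let flip : (Fin n → Bool) ≃ (Fin n → Bool) := Equiv.piCongrRight fun _ => Equiv.boolNot
  have hmag : magnetization ∘ flip = Neg.neg ∘ magnetization (n := n) := by
    ext s
    simp [flip, magnetization, spinVal_not, neg_div]
  have hweight : curieWeissWeight γ ∘ flip = curieWeissWeight (n := n) γ := by
    ext s
    have hneg : magnetization (flip s) = -magnetization s := congrFun hmag s
    simp only [Function.comp_apply, curieWeissWeight, hneg, neg_sq]
  refine ⟨?_⟩
  rw [Measure.neg, curieWeissLaw, ProbabilityMeasure.coe_mk, map_gibbsLaw measurable_neg, ← hmag]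
  nth_rw 1 [← hweight]
  exact gibbsLaw_comp_equiv flip _ _

lemma sum_exp_linearized_weight (n : ℕ) (γ x : ℝ) :
    ∑ s : Fin n → Bool, Real.exp (n * (γ * x * magnetization s - γ * x ^ 2 / 2)) =
      Real.exp (n * freeEnergy γ x) := by
  have hsplit : ∀ s : Fin n → Bool, Real.exp (n * (γ * x * magnetization s - γ * x ^ 2 / 2)) =
      Real.exp (γ * x * ∑ i, spinVal (s i)) * Real.exp (-(n * (γ * x ^ 2 / 2))) := fun s => by
    rw [← natCast_mul_magnetization, ← Real.exp_add]
    ring_nf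
  have hcosh : 0 < 2 * Real.cosh (γ * x) := by positivity
  simp only [hsplit, ← Finset.sum_mul, sum_exp_mul_sum_spinVal, Fintype.card_fin]
  rw [freeEnergy, mul_sub, sub_eq_add_neg, Real.exp_add, Real.exp_nat_mul, Real.exp_log hcosh]

/-- Tangent-line bound `m² ≥ 2 x m - x²` in the exponent. -/
lemma exp_freeEnergy_le_sum_curieWeissWeight (hγ : 0 ≤ γ) (x : ℝ) :
    Real.exp (n * freeEnergy γ x) ≤ ∑ s : Fin n → Bool, curieWeissWeight γ s := by
  rw [← sum_exp_linearized_weight]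
  refine Finset.sum_le_sum fun s _ => ?_
  rw [curieWeissWeight]
  gcongr
  nlinarith [mul_nonneg hγ (sq_nonneg (magnetization s - x))]

/-- On the level set `{m = x}` the tangent-line bound is an equality. -/
lemma sum_curieWeissWeight_level_le (n : ℕ) (γ x : ℝ) :
    ∑ s : Fin n → Bool with magnetization s ∈ ({x} : Set ℝ), curieWeissWeight γ s ≤
      Real.exp (n * freeEnergy γ x) := by
  rw [← sum_exp_linearized_weight]
  calc ∑ s : Fin n → Bool with magnetization s ∈ ({x} : Set ℝ), curieWeissWeight γ s
      = ∑ s : Fin n → Bool with magnetization s ∈ ({x} : Set ℝ),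
          Real.exp (n * (γ * x * magnetization s - γ * x ^ 2 / 2)) := by
        refine Finset.sum_congr rfl fun s hs => ?_
        rw [curieWeissWeight, Set.mem_singleton_iff.mp (Finset.mem_filter.mp hs).2]
        ring_nf
    _ ≤ ∑ s : Fin n → Bool, Real.exp (n * (γ * x * magnetization s - γ * x ^ 2 / 2)) :=
        Finset.sum_le_univ_sum_of_nonneg fun s => (Real.exp_pos _).le

lemma curieWeissLaw_real_singleton_le (n : ℕ) (hγ : 0 ≤ γ) (x y : ℝ) :
    (curieWeissLaw n γ : Measure ℝ).real {x} ≤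
      Real.exp (n * (freeEnergy γ x - freeEnergy γ y)) := by
  rw [curieWeissLaw, ProbabilityMeasure.coe_mk,
    measureReal_gibbsLaw (fun s => (curieWeissWeight_pos γ s).le) _ (measurableSet_singleton x),
    mul_sub, Real.exp_sub]
  gcongr
  · exact sum_curieWeissWeight_level_le n γ x
  · exact exp_freeEnergy_le_sum_curieWeissWeight hγ y

lemma curieWeissLaw_real_le (n : ℕ) (hγ : 0 ≤ γ) {A : Set ℝ} {y δ : ℝ}
    (hA : ∀ x ∈ A, |x| ≤ 1 → freeEnergy γ x ≤ freeEnergy γ y - δ) :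
    (curieWeissLaw n γ : Measure ℝ).real A ≤ (n + 1) * Real.exp (-(n * δ)) := by
  have hsupport : ∀ᵐ x ∂(curieWeissLaw n γ : Measure ℝ),
      x ∈ Finset.univ.image (magnetization (n := n)) := ae_mem_image_gibbsLaw _ _
  refine (measureReal_le_card_mul hsupport (Real.exp_pos (-(n * δ))).le
    fun x hx hxA => ?_).trans ?_
  · obtain ⟨s, -, rfl⟩ := Finset.mem_image.mp hx
    refine (curieWeissLaw_real_singleton_le n hγ _ y).trans ?_
    rw [← mul_neg]
    gcongr
    linarith [hA _ hxA (abs_magnetization_le_one s)]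
  · gcongr
    exact_mod_cast card_image_magnetization_le

lemma tendsto_succ_mul_exp_neg {δ : ℝ} (hδ : 0 < δ) :
    Tendsto (fun n : ℕ => (n + 1) * Real.exp (-(n * δ))) atTop (nhds 0) := by
  have hlt : Real.exp (-δ) < 1 := by simpa using hδ
  have hpow := (tendsto_self_mul_const_pow_of_lt_one (Real.exp_pos _).le hlt).add
    (tendsto_pow_atTop_nhds_zero_of_lt_one (Real.exp_pos _).le hlt)
  rw [add_zero] at hpow
  refine hpow.congr fun n => ?_
  rw [← Real.exp_nat_mul, mul_neg, add_one_mul]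

theorem tendsto_curieWeissLaw (hγ : 0 < γ) {m : ℝ}
    (hm : IsGreatest {z | z = Real.tanh (γ * z)} m) :
    Tendsto (fun n => curieWeissLaw n γ) atTop (nhds (symmetricTwoPoint m)) := by
  refine tendsto_symmetricTwoPoint_of_isNegInvariant fun ε hε => ?_
  obtain ⟨δ, hδ, hgap⟩ := exists_freeEnergy_le_sub hγ hm hε
  exact squeeze_zero (fun n => measureReal_nonneg)
    (fun n => curieWeissLaw_real_le n hγ.le fun x hx hx1 => hgap x hx1 hx)
    (tendsto_succ_mul_exp_neg hδ)

end CurieWeiss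

section TwoBlock

variable {n : ℕ}

lemma twoMagDist_eq_gibbsLaw (n : ℕ) (α β : ℝ) :
    twoMagDist n α β =
      gibbsLaw (fun σ : TwoConf n => curieWeissWeight (β / 2) σ.1 * curieWeissWeight (β / 2) σ.2 *
          Real.exp (α * ∑ i, spinVal (σ.1 i) * spinVal (σ.2 i)))
        fun σ => (magnetization σ.1, magnetization σ.2) := by
  have hweight : ∀ σ : TwoConf n, Real.exp (-twoH n α β σ) =
      curieWeissWeight (β / 2) σ.1 * curieWeissWeight (β / 2) σ.2 *
        Real.exp (α * ∑ i, spinVal (σ.1 i) * spinVal (σ.2 i)) := fun σ => by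
    rw [curieWeissWeight, curieWeissWeight, ← Real.exp_add, ← Real.exp_add, twoH,
      ← Finset.sum_mul_sum, ← Finset.sum_mul_sum, magnetization, magnetization]
    congr 1
    field_simp
    ring
  have hmag : ∀ s : Fin n → Bool, 2 / (2 * n : ℝ) * ∑ i, spinVal (s i) = magnetization s :=
    fun s => by rw [magnetization]; field_simp
  simp only [twoMagDist, mag1, mag2, hweight, hmag, gibbsLaw]

lemma twoMagDist_zero (n : ℕ) (β : ℝ) :
    twoMagDist n 0 β = (curieWeissLaw n (β / 2)).prod (curieWeissLaw n (β / 2)) := by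
  rw [twoMagDist_eq_gibbsLaw, ProbabilityMeasure.toMeasure_prod, curieWeissLaw,
    ProbabilityMeasure.coe_mk, gibbsLaw_prod fun s => (curieWeissWeight_pos _ s).le]
  simp

lemma abs_sum_spinVal_mul_spinVal_le (σ : TwoConf n) :
    |∑ i, spinVal (σ.1 i) * spinVal (σ.2 i)| ≤ n := by
  refine (Finset.abs_sum_le_sum_abs _ _).trans_eq ?_
  simp [abs_mul, abs_spinVal]

lemma abs_integral_twoMagDist_sub_le (n : ℕ) (α β : ℝ)
    (f : BoundedContinuousFunction (ℝ × ℝ) ℝ) :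
    |∫ x, f x ∂twoMagDist n α β - ∫ x, f x ∂twoMagDist n 0 β| ≤
      (Real.exp (2 * |n * α|) - 1) * ‖f‖ := by
  have hw : ∀ σ : TwoConf n, 0 < curieWeissWeight (β / 2) σ.1 * curieWeissWeight (β / 2) σ.2 :=
    fun σ => mul_pos (curieWeissWeight_pos _ _) (curieWeissWeight_pos _ _)
  rw [twoMagDist_eq_gibbsLaw, twoMagDist_eq_gibbsLaw,
    integral_gibbsLaw fun σ => (mul_pos (hw σ) (Real.exp_pos _)).le,
    integral_gibbsLaw fun σ => (mul_pos (hw σ) (Real.exp_pos _)).le]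
  simp only [zero_mul, Real.exp_zero, mul_one]
  refine norm_centerMass_mul_exp_sub_le hw (fun σ => ?_) fun σ => f.norm_coe_le_norm _
  rw [abs_mul, abs_mul, Nat.abs_cast, mul_comm]
  exact mul_le_mul_of_nonneg_right (abs_sum_spinVal_mul_spinVal_le σ) (abs_nonneg α)

lemma tendsto_integral_twoMagDist_zero {β mp : ℝ} (hβ : 0 < β)
    (hmp : IsGreatest {z | z = Real.tanh (β / 2 * z)} mp)
    (f : BoundedContinuousFunction (ℝ × ℝ) ℝ) :
    Tendsto (fun n => ∫ x, f x ∂twoMagDist n 0 β) atTop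
      (nhds (∫ x, f x ∂(symmetricTwoPoint mp : Measure ℝ).prod (symmetricTwoPoint mp))) := by
  have hblock := tendsto_curieWeissLaw (half_pos hβ) hmp
  have hprod := (ProbabilityMeasure.continuous_prod.tendsto _).comp (hblock.prodMk_nhds hblock)
  simpa only [Function.comp_apply, twoMagDist_zero, ProbabilityMeasure.toMeasure_prod] using
    ProbabilityMeasure.tendsto_iff_forall_integral_tendsto.mp hprod f

end TwoBlock

theorem two_block_mixed_limit_general {β : ℝ} (hβ : 0 < β) {mp : ℝ}
    (hmp : IsGreatest {z | z = Real.tanh (β / 2 * z)} mp) {α : ℕ → ℝ}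
    (hNα : Tendsto (fun N : ℕ => (N : ℝ) * α N) atTop (nhds 0))
    (f : BoundedContinuousFunction (ℝ × ℝ) ℝ) :
    Tendsto (fun n : ℕ => ∫ x, f x ∂(twoMagDist n (α (2 * n)) β)) atTop
      (nhds (∫ x, f x ∂((4 : ENNReal)⁻¹ •
        (Measure.dirac ((mp, mp) : ℝ × ℝ) + Measure.dirac ((mp, -mp) : ℝ × ℝ) +
          Measure.dirac ((-mp, mp) : ℝ × ℝ) + Measure.dirac ((-mp, -mp) : ℝ × ℝ))))) := by
  have hcoupling : Tendsto (fun n : ℕ => 2 * |n * α (2 * n)|) atTop (nhds 0) := by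
    have heven := (hNα.comp (tendsto_id.const_mul_atTop' (two_pos : 0 < 2))).abs
    simpa [abs_mul, mul_assoc] using heven
  have hbound : Tendsto (fun n : ℕ => (Real.exp (2 * |n * α (2 * n)|) - 1) * ‖f‖) atTop
      (nhds 0) := by
    simpa using (hcoupling.rexp.sub_const 1).mul_const ‖f‖
  have hdiff : Tendsto
      (fun n : ℕ => ∫ x, f x ∂twoMagDist n (α (2 * n)) β - ∫ x, f x ∂twoMagDist n 0 β)
      atTop (nhds 0) :=
    squeeze_zero_norm (fun n => abs_integral_twoMagDist_sub_le n (α (2 * n)) β f) hbound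
  rw [← symmetricTwoPoint_prod_self]
  simpa using hdiff.add (tendsto_integral_twoMagDist_zero hβ hmp f)

/-- Theorem 1(2): if `β > 2`, `α_N > 0`, `α_N → 0` and `N α_N → 0`, then the distribution
of `m^N = (m₁, m₂)` under the Gibbs measure converges weakly to the four-point mixture
`(1/4)(δ_{(m⁺,m⁺)} + δ_{(m⁺,m⁻)} + δ_{(m⁻,m⁺)} + δ_{(m⁻,m⁻))})` with `m^± = m^±(β/2)`. -/
theorem two_block_mixed_limit (β : ℝ) (hβ : 2 < β) (mp : ℝ)
    (hfix : mp = Real.tanh (β / 2 * mp))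
    (hmax : ∀ z : ℝ, z = Real.tanh (β / 2 * z) → z ≤ mp)
    (α : ℕ → ℝ) (hαpos : ∀ N, 0 < α N)
    (hα0 : Tendsto α atTop (nhds 0))
    (hNα : Tendsto (fun N : ℕ => (N : ℝ) * α N) atTop (nhds 0))
    (f : BoundedContinuousFunction (ℝ × ℝ) ℝ) :
    Tendsto (fun n : ℕ => ∫ x, f x ∂(twoMagDist n (α (2 * n)) β)) atTop
      (nhds (∫ x, f x ∂((4 : ENNReal)⁻¹ •
        (Measure.dirac ((mp, mp) : ℝ × ℝ) + Measure.dirac ((mp, -mp) : ℝ × ℝ) +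
          Measure.dirac ((-mp, mp) : ℝ × ℝ) + Measure.dirac ((-mp, -mp) : ℝ × ℝ))))) :=
  two_block_mixed_limit_general (by linarith) ⟨hfix, hmax⟩ hNα f

end
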